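/- Let f^{w_1},…,f^{w_N} be K-layer feedforward networks of a common architecture with C = n_K output classes and monotone nondecreasing activation h, let x* ∈ ℝ^{n_0}, let y* be a class and ε ≥ 0. Then for every x̄ with ‖x* − x̄‖_∞ ≤ ε: Ê^{N,ε}_{y*,LB} ≤ Ê^N(x̄)_{y*}, and Ê^N(x̄)_c ≤ Ê^{N,ε}_{c,UB} for every class c ≠ y*. -/

import Mathlib

/-- Activations of a feedforward network: `netPhi … x 0 = x` (the input `φ_(0)`) and
`netPhi … x (k+1) = h (W_k (netPhi … x k) + b_k)` (the activation `φ_(k+1)`).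
For a `K`-layer network only the values with `k ≤ K - 1` are used. -/
noncomputable def netPhi (n : ℕ → ℕ)
    (W : ∀ k : ℕ, Matrix (Fin (n (k + 1))) (Fin (n k)) ℝ)
    (b : ∀ k : ℕ, Fin (n (k + 1)) → ℝ) (h : ℝ → ℝ)
    (x : Fin (n 0) → ℝ) : (k : ℕ) → Fin (n k) → ℝ
  | 0 => x
  | (k + 1) => fun i => h (((W k).mulVec (netPhi n W b h x k) + b k) i)

/-- Pre-activations: `netPre … x k = W_k φ_(k) + b_k`, i.e. the pre-activation
`f_(k+1)` of the network.  The output of a `K`-layer network is `f^w(x) = netPre … x (K-1)`. -/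
noncomputable def netPre (n : ℕ → ℕ)
    (W : ∀ k : ℕ, Matrix (Fin (n (k + 1))) (Fin (n k)) ℝ)
    (b : ∀ k : ℕ, Fin (n (k + 1)) → ℝ) (h : ℝ → ℝ)
    (x : Fin (n 0) → ℝ) (k : ℕ) : Fin (n (k + 1)) → ℝ :=
  (W k).mulVec (netPhi n W b h x k) + b k

/-- Interval bound propagation on the activations: `ibpPhi … x ε k = (φ_(k)^L, φ_(k)^U)`.
At `k = 0` the bounds are `x ∓ ε·𝟙`; at `k+1` they are `h (μ_{k+1} ∓ r_{k+1})` with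
`μ_{k+1} = W_k (φ_(k)^U + φ_(k)^L)/2 + b_k` and `r_{k+1} = |W_k| (φ_(k)^U − φ_(k)^L)/2`. -/
noncomputable def ibpPhi (n : ℕ → ℕ)
    (W : ∀ k : ℕ, Matrix (Fin (n (k + 1))) (Fin (n k)) ℝ)
    (b : ∀ k : ℕ, Fin (n (k + 1)) → ℝ) (h : ℝ → ℝ)
    (x : Fin (n 0) → ℝ) (ε : ℝ) : (k : ℕ) → (Fin (n k) → ℝ) × (Fin (n k) → ℝ)
  | 0 => (fun i => x i - ε, fun i => x i + ε)
  | (k + 1) =>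
      let L := (ibpPhi n W b h x ε k).1
      let U := (ibpPhi n W b h x ε k).2
      let μ := (W k).mulVec (fun i => (U i + L i) / 2) + b k
      let r := (Matrix.of fun i j => |W k i j|).mulVec (fun i => (U i - L i) / 2)
      (fun i => h (μ i - r i), fun i => h (μ i + r i))

/-- Interval bound propagation on the pre-activations:
`ibpPre … x ε k = (f_(k+1)^L, f_(k+1)^U) = (μ_{k+1} − r_{k+1}, μ_{k+1} + r_{k+1})`.
The IBP output bounds of a `K`-layer network are `(f^{w,L,ε}, f^{w,U,ε}) = ibpPre … x ε (K-1)`. -/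
noncomputable def ibpPre (n : ℕ → ℕ)
    (W : ∀ k : ℕ, Matrix (Fin (n (k + 1))) (Fin (n k)) ℝ)
    (b : ∀ k : ℕ, Fin (n (k + 1)) → ℝ) (h : ℝ → ℝ)
    (x : Fin (n 0) → ℝ) (ε : ℝ) (k : ℕ) : (Fin (n (k + 1)) → ℝ) × (Fin (n (k + 1)) → ℝ) :=
  let L := (ibpPhi n W b h x ε k).1
  let U := (ibpPhi n W b h x ε k).2
  let μ := (W k).mulVec (fun i => (U i + L i) / 2) + b k
  let r := (Matrix.of fun i j => |W k i j|).mulVec (fun i => (U i - L i) / 2)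
  (fun i => μ i - r i, fun i => μ i + r i)

/-- Softmax probability of class `y` for logits `z ∈ ℝ^C`. -/
noncomputable def softmax {C : ℕ} (y : Fin C) (z : Fin C → ℝ) : ℝ :=
  Real.exp (z y) / ∑ j, Real.exp (z j)

/-- The corner vector `f_LB` with `(f_LB) y = L y` and `(f_LB) j = U j` for `j ≠ y`. -/
def cornerLB {C : ℕ} (y : Fin C) (L U : Fin C → ℝ) : Fin C → ℝ :=
  fun j => if j = y then L j else U j

/-- The corner vector `f_UB` with `(f_UB) c' = U c'` and `(f_UB) j = L j` for `j ≠ c'`. -/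
def cornerUB {C : ℕ} (c' : Fin C) (L U : Fin C → ℝ) : Fin C → ℝ :=
  fun j => if j = c' then U j else L j

/-- Empirical posterior predictor of `N` networks `f^{w_1},…,f^{w_N}` of the common
`K`-layer architecture given by `(n, Ws i, bs i, h)`:
`Ê^N(x) c = (1/N) ∑ i σ_c(f^{w_i}(x))`. -/
noncomputable def ensemblePred (n : ℕ → ℕ) (N K : ℕ)
    (Ws : Fin N → ∀ k : ℕ, Matrix (Fin (n (k + 1))) (Fin (n k)) ℝ)
    (bs : Fin N → ∀ k : ℕ, Fin (n (k + 1)) → ℝ) (h : ℝ → ℝ)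
    (x : Fin (n 0) → ℝ) (c : Fin (n (K - 1 + 1))) : ℝ :=
  (1 / (N : ℝ)) * ∑ i : Fin N, softmax c (netPre n (Ws i) (bs i) h x (K - 1))

/-- IBP lower bound on the empirical predictor for class `y` at `x` and radius `ε`:
`Ê^{N,ε}_{y,LB} = (1/N) ∑ i σ_y(f_LB^{w_i,ε}(x))`. -/
noncomputable def ensembleLB (n : ℕ → ℕ) (N K : ℕ)
    (Ws : Fin N → ∀ k : ℕ, Matrix (Fin (n (k + 1))) (Fin (n k)) ℝ)
    (bs : Fin N → ∀ k : ℕ, Fin (n (k + 1)) → ℝ) (h : ℝ → ℝ)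
    (x : Fin (n 0) → ℝ) (y : Fin (n (K - 1 + 1))) (ε : ℝ) : ℝ :=
  (1 / (N : ℝ)) * ∑ i : Fin N,
    softmax y (cornerLB y (ibpPre n (Ws i) (bs i) h x ε (K - 1)).1
      (ibpPre n (Ws i) (bs i) h x ε (K - 1)).2)

/-- IBP upper bound on the empirical predictor for class `c'` at `x` and radius `ε`:
`Ê^{N,ε}_{c',UB} = (1/N) ∑ i σ_{c'}(f_UB^{w_i,ε,c'}(x))`. -/
noncomputable def ensembleUB (n : ℕ → ℕ) (N K : ℕ)
    (Ws : Fin N → ∀ k : ℕ, Matrix (Fin (n (k + 1))) (Fin (n k)) ℝ)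
    (bs : Fin N → ∀ k : ℕ, Fin (n (k + 1)) → ℝ) (h : ℝ → ℝ)
    (x : Fin (n 0) → ℝ) (c' : Fin (n (K - 1 + 1))) (ε : ℝ) : ℝ :=
  (1 / (N : ℝ)) * ∑ i : Fin N,
    softmax c' (cornerUB c' (ibpPre n (Ws i) (bs i) h x ε (K - 1)).1
      (ibpPre n (Ws i) (bs i) h x ε (K - 1)).2)

/-!
Moving the input of an affine map by at most `r` componentwise moves its output by at most `|W| r`,
and a monotone activation maps each interval into the interval between the images of its end points.
By induction on the layers, the true activations stay in the propagated boxes. The softmax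
probability of a class increases with its own logit and decreases with every other one, so over a
box of logits it is extremal at two opposite corners; averaging over the networks preserves the
inequalities.
-/

open Set
open scoped Matrix

section IntervalArithmetic

variable {m n R : Type*} [Fintype n]

lemma abs_mulVec_sub_mulVec_le [Ring R] [LinearOrder R] [IsStrictOrderedRing R]
    (W : Matrix m n R) {v c r : n → R} (hv : |v - c| ≤ r) :
    |W *ᵥ v - W *ᵥ c| ≤ (Matrix.of fun i j => |W i j|) *ᵥ r := by
  rw [← Matrix.mulVec_sub]
  intro i
  calc |∑ j, W i j * (v - c) j|
      ≤ ∑ j, |W i j * (v - c) j| := Finset.abs_sum_le_sum_abs _ _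
    _ = ∑ j, |W i j| * |(v - c) j| := by simp only [abs_mul]
    _ ≤ ∑ j, |W i j| * r j := by
      gcongr with j
      exact hv j

lemma abs_sub_midpoint_le [Field R] [LinearOrder R] [IsStrictOrderedRing R]
    {a b x : R} (hx : x ∈ Icc a b) : |x - (b + a) / 2| ≤ (b - a) / 2 := by
  rw [abs_le]
  constructor <;> linarith [hx.1, hx.2]

lemma mulVec_add_mem_Icc [Field R] [LinearOrder R] [IsStrictOrderedRing R]
    (W : Matrix m n R) (b : m → R) {L U v : n → R} (hv : v ∈ Icc L U) :
    let μ := W *ᵥ (fun j => (U j + L j) / 2) + b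
    let r := (Matrix.of fun i j => |W i j|) *ᵥ fun j => (U j - L j) / 2
    W *ᵥ v + b ∈ Icc (μ - r) (μ + r) := by
  intro μ r
  have hdev : |(W *ᵥ v + b) - μ| ≤ r := by
    rw [add_sub_add_right_eq_sub]
    exact abs_mulVec_sub_mulVec_le W fun j => abs_sub_midpoint_le ⟨hv.1 j, hv.2 j⟩
  obtain ⟨hupper, hlower⟩ := abs_le'.mp hdev
  rw [neg_sub] at hlower
  exact ⟨sub_le_comm.mp hlower, sub_le_iff_le_add'.mp hupper⟩

end IntervalArithmetic

section Softmax

variable {C : ℕ} {y : Fin C} {z z' L U : Fin C → ℝ}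

lemma softmax_le_softmax (hy : z y ≤ z' y) (hne : ∀ j ≠ y, z' j ≤ z j) :
    softmax y z ≤ softmax y z' := by
  have sum_pos (w : Fin C → ℝ) : 0 < ∑ j, Real.exp (w j) :=
    Finset.sum_pos (fun j _ => Real.exp_pos _) ⟨y, Finset.mem_univ y⟩
  have exp_add_le (j : Fin C) : z y + z' j ≤ z' y + z j := by
    obtain rfl | hj := eq_or_ne j y
    · exact (add_comm _ _).le
    · exact add_le_add hy (hne j hj)
  unfold softmax
  rw [div_le_div_iff₀ (sum_pos z) (sum_pos z'), Finset.mul_sum, Finset.mul_sum]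
  simp only [← Real.exp_add]
  exact Finset.sum_le_sum fun j _ => Real.exp_le_exp.mpr (exp_add_le j)

lemma softmax_cornerLB_le (hz : z ∈ Icc L U) : softmax y (cornerLB y L U) ≤ softmax y z := by
  refine softmax_le_softmax ?_ fun j hj => ?_
  · simpa only [cornerLB, if_pos] using hz.1 y
  · simpa only [cornerLB, if_neg hj] using hz.2 j

lemma softmax_le_cornerUB (hz : z ∈ Icc L U) : softmax y z ≤ softmax y (cornerUB y L U) := by
  refine softmax_le_softmax ?_ fun j hj => ?_
  · simpa only [cornerUB, if_pos] using hz.2 y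
  · simpa only [cornerUB, if_neg hj] using hz.1 j

end Softmax

section Network

variable (n : ℕ → ℕ) (W : ∀ k : ℕ, Matrix (Fin (n (k + 1))) (Fin (n k)) ℝ)
  (b : ∀ k : ℕ, Fin (n (k + 1)) → ℝ) {h : ℝ → ℝ} {x x' : Fin (n 0) → ℝ} {ε : ℝ}

lemma netPre_mem_Icc_of_netPhi_mem_Icc {k : ℕ}
    (hφ : netPhi n W b h x' k ∈ Icc (ibpPhi n W b h x ε k).1 (ibpPhi n W b h x ε k).2) :
    netPre n W b h x' k ∈ Icc (ibpPre n W b h x ε k).1 (ibpPre n W b h x ε k).2 :=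
  mulVec_add_mem_Icc (W k) (b k) hφ

lemma netPhi_mem_Icc_ibpPhi (hmono : Monotone h) (hx : ‖x - x'‖ ≤ ε) (k : ℕ) :
    netPhi n W b h x' k ∈ Icc (ibpPhi n W b h x ε k).1 (ibpPhi n W b h x ε k).2 := by
  induction k with
  | zero =>
    have hi (i) : |x i - x' i| ≤ ε := (norm_le_pi_norm (x - x') i).trans hx
    exact ⟨fun i => sub_le_of_abs_sub_le_right (hi i),
      fun i => sub_le_iff_le_add'.mp (abs_sub_le_iff.mp (hi i)).2⟩
  | succ k ih =>
    have hpre := netPre_mem_Icc_of_netPhi_mem_Icc n W b ih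
    exact ⟨fun i => hmono (hpre.1 i), fun i => hmono (hpre.2 i)⟩

lemma netPre_mem_Icc_ibpPre (hmono : Monotone h) (hx : ‖x - x'‖ ≤ ε) (k : ℕ) :
    netPre n W b h x' k ∈ Icc (ibpPre n W b h x ε k).1 (ibpPre n W b h x ε k).2 :=
  netPre_mem_Icc_of_netPhi_mem_Icc n W b (netPhi_mem_Icc_ibpPhi n W b hmono hx k)

end Network

-- Counting the layers as `K + 1` keeps the output index `K + 1 - 1` from truncating.
theorem ensemble_ibp_bounds_general (n : ℕ → ℕ) (N K : ℕ)
    (Ws : Fin N → ∀ k : ℕ, Matrix (Fin (n (k + 1))) (Fin (n k)) ℝ)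
    (bs : Fin N → ∀ k : ℕ, Fin (n (k + 1)) → ℝ) {h : ℝ → ℝ} (hmono : Monotone h)
    {x x' : Fin (n 0) → ℝ} {ε : ℝ} (hx : ‖x - x'‖ ≤ ε) (c : Fin (n (K + 1))) :
    ensemblePred n N (K + 1) Ws bs h x' c ∈
      Icc (ensembleLB n N (K + 1) Ws bs h x c ε) (ensembleUB n N (K + 1) Ws bs h x c ε) := by
  have hbox (i : Fin N) := netPre_mem_Icc_ibpPre n (Ws i) (bs i) hmono hx K
  unfold ensemblePred ensembleLB ensembleUB
  constructor
  · gcongr with i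
    exact softmax_cornerLB_le (hbox i)
  · gcongr with i
    exact softmax_le_cornerUB (hbox i)

/-- for `N` networks of a common `K`-layer architecture (`K ≥ 1`) with
monotone nondecreasing activation, a test point `x*`, class `y*` and `ε ≥ 0`, every
`x̄` with `‖x* − x̄‖_∞ ≤ ε` satisfies `Ê^{N,ε}_{y*,LB} ≤ Ê^N(x̄)_{y*}` and
`Ê^N(x̄)_c ≤ Ê^{N,ε}_{c,UB}` for every class `c ≠ y*`. -/
theorem ensemble_ibp_bounds (n : ℕ → ℕ) (N K : ℕ) (hK : 1 ≤ K)
    (Ws : Fin N → ∀ k : ℕ, Matrix (Fin (n (k + 1))) (Fin (n k)) ℝ)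
    (bs : Fin N → ∀ k : ℕ, Fin (n (k + 1)) → ℝ) (h : ℝ → ℝ) (hmono : Monotone h)
    (xstar : Fin (n 0) → ℝ) (ystar : Fin (n (K - 1 + 1))) (ε : ℝ) (hε : 0 ≤ ε)
    (xbar : Fin (n 0) → ℝ) (hxbar : ‖xstar - xbar‖ ≤ ε) :
    ensembleLB n N K Ws bs h xstar ystar ε ≤ ensemblePred n N K Ws bs h xbar ystar ∧
    ∀ c : Fin (n (K - 1 + 1)), c ≠ ystar →
      ensemblePred n N K Ws bs h xbar c ≤ ensembleUB n N K Ws bs h xstar c ε := by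
  obtain ⟨K, rfl⟩ := Nat.exists_eq_add_of_le' hK
  have hpred := ensemble_ibp_bounds_general n N K Ws bs hmono hxbar
  exact ⟨(hpred ystar).1, fun c _ => (hpred c).2⟩
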